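/- Let ℍ denote the real quaternions with standard quaternionic conjugation. Let ℓ ≥ 1, let r be an integer with 0 ≤ r ≤ ℓ, and let β, γ be nonnegative integers with β + 2γ = ℓ and γ ≤ min(r, ℓ − r). Let (E, σ) be the real étale algebra with involution E = ℂ^β × (ℂ × ℂ)^γ, where σ is complex conjugation on each ℂ factor and the switch of coordinates on each ℂ × ℂ factor. Let D ∈ M_ℓ(ℍ) be the diagonal matrix with r diagonal entries equal to 1 and ℓ − r diagonal entries equal to −1, and let τ be the involution of the ℝ-algebra M_ℓ(ℍ) given by τ(x) = D⁻¹ · x̄ᵀ · D, where x̄ᵀ is the quaternionic conjugate transpose. Then there exists an injective ℝ-algebra homomorphism ι : E → M_ℓ(ℍ) such that ι(σ(a)) = τ(ι(a)) for all a ∈ E. -/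

import Mathlib

/-- The real étale algebra `ℂ^β × (ℂ × ℂ)^γ`. -/
abbrev RealEtaleAlgC (β γ : ℕ) : Type := (Fin β → ℂ) × (Fin γ → ℂ × ℂ)

/-- The involution of `ℂ^β × (ℂ × ℂ)^γ`: complex conjugation on each `ℂ` factor and the
coordinate switch on each `ℂ × ℂ` factor. -/
def sigmaC (β γ : ℕ) : RealEtaleAlgC β γ → RealEtaleAlgC β γ :=
  fun x => (fun i => (starRingEnd ℂ) (x.1 i), fun i => ((x.2 i).2, (x.2 i).1))

/-- The diagonal matrix `D ∈ M_ℓ(ℍ)` with `r` diagonal entries `1` and `ℓ - r` diagonal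
entries `-1`. -/
noncomputable def quatSignMatrix (ℓ r : ℕ) : Matrix (Fin ℓ) (Fin ℓ) (Quaternion ℝ) :=
  Matrix.diagonal fun i => if (i : ℕ) < r then 1 else -1

abbrev IdxS (β γ : ℕ) : Type := (Fin γ ⊕ Fin β) ⊕ Fin γ

noncomputable def phiFun (β γ : ℕ) (a : RealEtaleAlgC β γ) : IdxS β γ → IdxS β γ → ℂ
  | .inl (.inl i), .inl (.inl j) => if i = j then ((a.2 i).1 + (starRingEnd ℂ) (a.2 i).2) / 2 else 0
  | .inl (.inl i), .inr j => if i = j then ((a.2 i).1 - (starRingEnd ℂ) (a.2 i).2) / 2 else 0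
  | .inr i, .inl (.inl j) => if i = j then ((a.2 i).1 - (starRingEnd ℂ) (a.2 i).2) / 2 else 0
  | .inr i, .inr j => if i = j then ((a.2 i).1 + (starRingEnd ℂ) (a.2 i).2) / 2 else 0
  | .inl (.inr i), .inl (.inr j) => if i = j then a.1 i else 0
  | _, _ => 0

noncomputable def phiHom (β γ : ℕ) : RealEtaleAlgC β γ →ₐ[ℝ] Matrix (IdxS β γ) (IdxS β γ) ℂ :=
  AlgHom.ofLinearMap
    { toFun := fun a => Matrix.of (phiFun β γ a)
      map_add' := by
        intro a b
        ext i j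
        rcases i with (i | i) | i <;> rcases j with (j | j) | j <;>
          simp [phiFun] <;> split_ifs <;> (try simp) <;> ring
      map_smul' := by
        intro a b
        ext i j
        rcases i with (i | i) | i <;> rcases j with (j | j) | j <;>
          simp [phiFun] <;> intros <;> ring }
    (by
      ext i j
      rcases i with (i | i) | i <;> rcases j with (j | j) | j <;>
          simp [phiFun, Matrix.one_apply])
    (by
      intro a b
      ext i j
      rcases i with (i | i) | i <;> rcases j with (j | j) | j <;>
          simp [phiFun, Matrix.mul_apply, Fintype.sum_sum_type] <;> split_ifs <;>
          simp_all <;> ring)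

lemma phiHom_apply (β γ : ℕ) (a : RealEtaleAlgC β γ) (i j : IdxS β γ) :
    phiHom β γ a i j = phiFun β γ a i j := rfl

lemma phiHom_inj (β γ : ℕ) : Function.Injective (phiHom β γ) := by
  intro a b h
  have H : ∀ i j, phiFun β γ a i j = phiFun β γ b i j := fun i j => by
    rw [← phiHom_apply, h, phiHom_apply]
  refine Prod.ext (funext fun i => ?_) (funext fun i => ?_)
  · simpa [phiFun] using H (.inl (.inr i)) (.inl (.inr i))
  · have h1 := H (.inl (.inl i)) (.inl (.inl i))
    have h2 := H (.inl (.inl i)) (.inr i)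
    simp only [phiFun, if_true] at h1 h2
    refine Prod.ext ?_ ?_
    · linear_combination h1 + h2
    · apply (starRingEnd ℂ).injective
      linear_combination h1 - h2

lemma phi_sigma (β γ : ℕ) (a : RealEtaleAlgC β γ) (s : IdxS β γ → ℂ)
    (h1 : ∀ i, s (.inl (.inl i)) = 1) (h2 : ∀ i, s (.inr i) = -1)
    (h3 : ∀ i, s i * s i = 1) (i j : IdxS β γ) :
    phiFun β γ (sigmaC β γ a) i j = s i * (starRingEnd ℂ) (phiFun β γ a j i) * s j := by
  rcases i with (i | i) | i <;> rcases j with (j | j) | j <;>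
    simp only [phiFun, sigmaC, h1, h2, map_zero, mul_zero, zero_mul]
  all_goals
    by_cases hij : i = j
    · subst hij
      have c2 : (starRingEnd ℂ) 2 = 2 := Complex.conj_ofNat 2
      simp [c2]
      try ring_nf
      try linear_combination -(starRingEnd ℂ) (a.1 i) * h3 (.inl (.inr i))
    · simp [hij, Ne.symm hij]

theorem statement14 (ℓ r β γ : ℕ) (hℓ : 1 ≤ ℓ) (hr : r ≤ ℓ)
    (hsum : β + 2 * γ = ℓ) (hγ : γ ≤ min r (ℓ - r)) :
    ∃ ι : RealEtaleAlgC β γ →ₐ[ℝ] Matrix (Fin ℓ) (Fin ℓ) (Quaternion ℝ),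
      Function.Injective ι ∧
        ∀ a : RealEtaleAlgC β γ,
          ι (sigmaC β γ a) =
            Ring.inverse (quatSignMatrix ℓ r) * Matrix.conjTranspose (ι a) * quatSignMatrix ℓ r := by
  have hD : quatSignMatrix ℓ r * quatSignMatrix ℓ r = 1 := by
    rw [quatSignMatrix, Matrix.diagonal_mul_diagonal, ← Matrix.diagonal_one]
    congr 1
    funext i
    split_ifs <;> simp
  have hinv : Ring.inverse (quatSignMatrix ℓ r) = quatSignMatrix ℓ r :=
    Ring.inverse_unit (⟨_, _, hD, hD⟩ : (Matrix (Fin ℓ) (Fin ℓ) (Quaternion ℝ))ˣ)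
  rw [hinv]
  have hl : γ + β + γ = ℓ := by omega
  let e : IdxS β γ ≃ Fin ℓ :=
    ((Equiv.sumCongr finSumFinEquiv (Equiv.refl _)).trans finSumFinEquiv).trans (finCongr hl)
  let s : IdxS β γ → ℂ := fun i => if (e i : ℕ) < r then 1 else -1
  have h1 : ∀ i, s (.inl (.inl i)) = 1 := by
    intro i
    have : (e (.inl (.inl i)) : ℕ) < r := by
      simp [e]; omega
    simp [s, this]
  have h2 : ∀ i, s (.inr i) = -1 := by
    intro i
    have : ¬ (e (.inr i) : ℕ) < r := by
      simp [e]; omega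
    simp only [s, this, if_false]
  have h3 : ∀ i, s i * s i = 1 := by
    intro i
    simp only [s]; split_ifs <;> simp
  have hstar : ∀ z : ℂ, star (Quaternion.ofComplex z) = Quaternion.ofComplex ((starRingEnd ℂ) z) := by
    intro z
    ext <;> simp
  have key : ∀ a i j, (((Matrix.reindexAlgEquiv ℝ (Quaternion ℝ) e).toAlgHom.comp
      (Quaternion.ofComplex.mapMatrix)).comp (phiHom β γ)) a (e i) (e j)
      = Quaternion.ofComplex (phiFun β γ a i j) := by
    intro a i j
    simp [phiHom_apply]
  refine ⟨((Matrix.reindexAlgEquiv ℝ (Quaternion ℝ) e).toAlgHom.comp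
    (Quaternion.ofComplex.mapMatrix)).comp (phiHom β γ), ?_, ?_⟩
  · intro a b h
    apply phiHom_inj
    ext i j
    have h' := congrFun (congrFun h (e i)) (e j)
    rw [key, key] at h'
    exact Quaternion.ofComplex.toRingHom.injective h'
  · intro a
    ext1 i j
    obtain ⟨i, rfl⟩ := e.surjective i
    obtain ⟨j, rfl⟩ := e.surjective j
    have hs : ∀ i, (if (e i : ℕ) < r then (1 : Quaternion ℝ) else -1) = Quaternion.ofComplex (s i) := by
      intro i
      simp only [s]; split_ifs
      · exact (map_one Quaternion.ofComplex).symm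
      · rw [map_neg, map_one]
    rw [quatSignMatrix, Matrix.mul_diagonal, Matrix.diagonal_mul, hs, hs, Matrix.conjTranspose_apply]
    rw [key, key, hstar, phi_sigma β γ a s h1 h2 h3, map_mul, map_mul]
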